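/- Let C be a linear code over a finite field F_q of length n (a subspace of F_q^n), identified with coordinate set E = {1,...,n}. For X ⊆ E define α_C(X) = log_q |C\(E−X)| (the log-size of the code punctured on E−X) and β_C(X) = log_q |C^⊥\(E−X)|. Then, for every subset X ⊆ E, |E − X| − α_C(E − X) = β_C(E) − β_C(X); i.e., (E, α_C, β_C) is a demi-matroid. -/

import Mathlib

open Finset

variable {ι F : Type*} [Fintype ι] [DecidableEq ι] [Field F] [Fintype F]

/-- Projection of `F^ι` onto the coordinates in `X`. -/
def proj (F : Type*) [Field F] (X : Finset ι) : (ι → F) →ₗ[F] ({i // i ∈ X} → F) :=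
  LinearMap.funLeft F F (fun i => i.1)

/-- The punctured code `C \ (E - X)`: the projection of `C` onto the coordinates in `X`. -/
def punct (C : Submodule F (ι → F)) (X : Finset ι) : Submodule F ({i // i ∈ X} → F) :=
  C.map (proj F X)

/-- The dual code of `C` with respect to the standard inner product. -/
def dualCode (C : Submodule F (ι → F)) : Submodule F (ι → F) where
  carrier := {v | ∀ u ∈ C, ∑ i, u i * v i = 0}
  zero_mem' := by intro u hu; simp
  add_mem' := by
    intro a b ha hb u hu
    simp only [Set.mem_setOf_eq] at ha hb
    simp only [Pi.add_apply, mul_add, Finset.sum_add_distrib, ha u hu, hb u hu, add_zero]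
  smul_mem' := by
    intro c v hv u hu
    simp only [Set.mem_setOf_eq] at hv
    simp only [Pi.smul_apply, smul_eq_mul, mul_left_comm, ← Finset.mul_sum, hv u hu, mul_zero]

/-- `α_C(X) = log_q |C \ (E - X)|`. -/
noncomputable def alphaC (C : Submodule F (ι → F)) (q : ℕ) (X : Finset ι) : ℝ :=
  Real.logb q (Nat.card (punct C X))

/-!
For a code `C` with coordinate set `E`, the words of `C` vanishing on `X` form, after deleting the
coordinates in `X`, the shortening of `C` to `E - X`. Rank-nullity for the projection of `C` onto
`X` says that the dimensions of the puncturing of `C` to `X` and the shortening of `C` to `E - X`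
add up to `dim C`. Extension by zero is adjoint to projection, so the dual of a punctured code is
the shortening of the dual code. Hence both sides of the identity are equal to the dimension of the
shortening of `C^⊥` to `E - X`. Over `F_q`, `α_C(X)` is the dimension of the puncturing.
-/

theorem finrank_map_add_finrank_inf_ker {K V W : Type*} [DivisionRing K] [AddCommGroup V]
    [Module K V] [AddCommGroup W] [Module K W] (p : Submodule K V) [FiniteDimensional K p]
    (f : V →ₗ[K] W) :
    Module.finrank K (p.map f) + Module.finrank K (p ⊓ LinearMap.ker f : Submodule K V) =
      Module.finrank K p := by
  rw [← LinearMap.range_domRestrict, ← Submodule.map_comap_subtype, ← LinearMap.ker_domRestrict,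
    Submodule.finrank_map_subtype_eq, LinearMap.finrank_range_add_finrank_ker]

theorem finrank_comap_eq_finrank_inf_range {R M N : Type*} [Semiring R] [AddCommMonoid M]
    [Module R M] [AddCommMonoid N] [Module R N] {f : M →ₗ[R] N} (hf : Function.Injective f)
    (p : Submodule R N) :
    Module.finrank R (p.comap f) = Module.finrank R (p ⊓ LinearMap.range f : Submodule R N) := by
  rw [inf_comm, ← Submodule.map_comap_eq]
  exact (Submodule.equivMapOfInjective f hf _).finrank_eq

theorem dotProduct_extend_zero {m n R : Type*} [Fintype m] [Fintype n]
    [NonUnitalNonAssocSemiring R] {f : m → n} (hf : Function.Injective f) (u : n → R)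
    (w : m → R) : u ⬝ᵥ Function.extend f w 0 = (u ∘ f) ⬝ᵥ w := by
  refine (Fintype.sum_of_injective f hf _ _ (fun j hj ↦ ?_) fun i ↦ ?_).symm
  · rw [Function.extend_apply' _ _ _ hj, Pi.zero_apply, mul_zero]
  · rw [hf.extend_apply, Function.comp_apply]

section Codes

variable {κ K : Type*} [Field K]

/-- The code `C` shortened to the coordinates in `X`: the words of `C` vanishing outside `X`,
restricted to `X`. It is encoded as the set of words on `X` whose extension by zero lies in `C`. -/
noncomputable def shorten (C : Submodule K (κ → K)) (X : Finset κ) :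
    Submodule K ({i // i ∈ X} → K) :=
  C.comap (Function.ExtendByZero.linearMap K Subtype.val)

theorem range_extendByZero_compl [Fintype κ] [DecidableEq κ] (X : Finset κ) :
    LinearMap.range (Function.ExtendByZero.linearMap K (Subtype.val : {i // i ∈ Xᶜ} → κ)) =
      LinearMap.ker (proj K X) := by
  have extend_eq_zero (w : {i // i ∈ Xᶜ} → K) {i : κ} (hi : i ∈ X) :
      Function.extend Subtype.val w 0 i = 0 :=
    Function.extend_apply' _ _ _ fun ⟨j, hj⟩ ↦ Finset.mem_compl.mp j.2 (hj ▸ hi)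
  ext v
  constructor
  · rintro ⟨w, rfl⟩
    ext ⟨i, hi⟩
    exact extend_eq_zero _ hi
  · intro hv
    refine ⟨proj K Xᶜ v, funext fun i ↦ ?_⟩
    by_cases hi : i ∈ X
    · have apply_eq_zero : v i = 0 := congrFun hv ⟨i, hi⟩
      exact (extend_eq_zero _ hi).trans apply_eq_zero.symm
    · exact Subtype.val_injective.extend_apply _ _ (⟨i, Finset.mem_compl.mpr hi⟩ : {i // i ∈ Xᶜ})

theorem finrank_punct_add_finrank_shorten_compl [Fintype κ] [DecidableEq κ]
    (C : Submodule K (κ → K)) (X : Finset κ) :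
    Module.finrank K (punct C X) + Module.finrank K (shorten C Xᶜ) = Module.finrank K C := by
  have extend_injective := Function.extend_injective
    (Subtype.val_injective (p := (· ∈ Xᶜ))) (0 : κ → K)
  rw [shorten, finrank_comap_eq_finrank_inf_range extend_injective, range_extendByZero_compl]
  exact finrank_map_add_finrank_inf_ker C (proj K X)

theorem finrank_punct_univ [Fintype κ] (C : Submodule K (κ → K)) :
    Module.finrank K (punct C Finset.univ) = Module.finrank K C := by
  have proj_injective : Function.Injective (proj K (Finset.univ : Finset κ)) :=
    LinearMap.funLeft_injective_of_surjective K K _ fun i ↦ ⟨⟨i, Finset.mem_univ i⟩, rfl⟩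
  exact (Submodule.equivMapOfInjective _ proj_injective C).finrank_eq.symm

theorem dualCode_punct [Fintype κ] (C : Submodule K (κ → K)) (X : Finset κ) :
    dualCode (punct C X) = shorten (dualCode C) X := by
  ext w
  have proj_extend_adjoint (u : κ → K) :
      u ⬝ᵥ Function.extend Subtype.val w 0 = proj K X u ⬝ᵥ w :=
    dotProduct_extend_zero Subtype.val_injective u w
  constructor
  · intro hw u hu
    exact (proj_extend_adjoint u).trans (hw _ (Submodule.mem_map_of_mem hu))
  · rintro hw _ ⟨u, hu, rfl⟩
    exact (proj_extend_adjoint u).symm.trans (hw u hu)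

theorem dualCoannihilator_map_dotProductEquiv [Fintype κ] [DecidableEq κ]
    (C : Submodule K (κ → K)) :
    (C.map (dotProductEquiv K κ).toLinearMap).dualCoannihilator = dualCode C := by
  ext v
  rw [Submodule.mem_dualCoannihilator]
  exact Set.forall_mem_image

theorem finrank_add_finrank_dualCode [Fintype κ] (C : Submodule K (κ → K)) :
    Module.finrank K C + Module.finrank K (dualCode C) = Fintype.card κ := by
  classical
  rw [← dualCoannihilator_map_dotProductEquiv, ← (dotProductEquiv K κ).finrank_map_eq C,
    Subspace.finrank_add_finrank_dualCoannihilator_eq, Module.finrank_fintype_fun_eq_card]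

theorem alphaC_card_eq_finrank_punct [Fintype K] (C : Submodule K (κ → K)) (X : Finset κ) :
    alphaC C (Fintype.card K) X = Module.finrank K (punct C X) := by
  have one_lt_card : (1 : ℝ) < Fintype.card K := mod_cast Fintype.one_lt_card
  rw [alphaC, Module.natCard_eq_pow_finrank (K := K), Nat.card_eq_fintype_card, Nat.cast_pow,
    Real.logb_pow, Real.logb_self_eq_one one_lt_card, mul_one]

theorem stmt_10_general [Fintype κ] [DecidableEq κ] (C : Submodule K (κ → K)) (X : Finset κ) :
    (Xᶜ.card : ℤ) - Module.finrank K (punct C Xᶜ) =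
      Module.finrank K (punct (dualCode C) Finset.univ) -
        Module.finrank K (punct (dualCode C) X) := by
  have card_eq : Module.finrank K (punct C Xᶜ) + Module.finrank K (shorten (dualCode C) Xᶜ) =
      Xᶜ.card := by
    rw [← dualCode_punct, finrank_add_finrank_dualCode, Fintype.card_coe]
  have finrank_dual_eq := finrank_punct_add_finrank_shorten_compl (dualCode C) X
  rw [finrank_punct_univ]
  lia

end Codes

/-- For a linear code `C` over `F_q` with coordinate set `E`, writing
`β_C = α_{C^⊥}`, one has `|E - X| - α_C(E - X) = β_C(E) - β_C(X)` for all `X ⊆ E`;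
i.e. `(E, α_C, β_C)` is a demi-matroid. -/
theorem stmt_10 (q : ℕ) (hq : Fintype.card F = q) (C : Submodule F (ι → F)) :
    ∀ X : Finset ι,
      ((Xᶜ.card : ℝ)) - alphaC C q Xᶜ
        = alphaC (dualCode C) q Finset.univ - alphaC (dualCode C) q X := by
  intro X
  subst hq
  simp only [alphaC_card_eq_finrank_punct]
  exact_mod_cast stmt_10_general C X
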